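/- For every complex number q with 0 < |q| < 1, one has ∑_{i,j,k,l ≥ 0} q^{i²+j²+k²+l²−ij−ik−il+jk+jl+i−j−k−l} / ((q;q)_i (q;q)_j (q;q)_k (q;q)_l) = 6 J_3³ / J_1³. -/

import Mathlib

open scoped BigOperators

/-- The infinite q-Pochhammer symbol `(a; q)_∞ = ∏_{k=0}^∞ (1 - a q^k)`. -/
noncomputable def qPochInf (a q : ℂ) : ℂ := ∏' n : ℕ, (1 - a * q ^ n)

/-- The finite q-Pochhammer symbol `(a; q)_n = ∏_{k=0}^{n-1} (1 - a q^k)`. -/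
noncomputable def qPoch (a q : ℂ) (n : ℕ) : ℂ :=
  Finset.prod (Finset.range n) (fun k => 1 - a * q ^ k)

/-- `J_m = (q^m; q^m)_∞`. -/
noncomputable def J (q : ℂ) (m : ℕ) : ℂ := qPochInf (q ^ m) (q ^ m)

/-- `J_{a,m} = (q^a; q^m)_∞ (q^{m-a}; q^m)_∞ (q^m; q^m)_∞`. -/
noncomputable def Jam (q : ℂ) (a m : ℕ) : ℂ :=
  qPochInf (q ^ a) (q ^ m) * qPochInf (q ^ (m - a)) (q ^ m) * qPochInf (q ^ m) (q ^ m)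
open Filter Topology

lemma aux_summable {a q : ℂ} (h1 : ‖q‖ < 1) : Summable (fun n : ℕ => ‖-(a * q ^ n)‖) := by
  simp only [norm_neg, norm_mul, norm_pow]
  exact (summable_geometric_of_lt_one (norm_nonneg _) h1).mul_left _

lemma aux_mult {q : ℂ} (a : ℂ) (h1 : ‖q‖ < 1) : Multipliable (fun n : ℕ => 1 - a * q ^ n) := by
  have := multipliable_one_add_of_summable (aux_summable (a := a) h1)
  simpa [sub_eq_add_neg] using this

lemma aux_tendsto {q : ℂ} (a : ℂ) (h1 : ‖q‖ < 1) :
    Tendsto (fun n => qPoch a q n) atTop (𝓝 (qPochInf a q)) :=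
  (aux_mult a h1).hasProd.tendsto_prod_nat

lemma aux_ne {a q : ℂ} (h1 : ‖q‖ < 1) (h : ∀ n : ℕ, 1 - a * q ^ n ≠ 0) : qPochInf a q ≠ 0 := by
  have := tprod_one_add_ne_zero_of_summable (f := fun n : ℕ => -(a * q ^ n))
    (by simpa [sub_eq_add_neg] using h) (aux_summable h1)
  simpa [sub_eq_add_neg, qPochInf] using this

lemma qPoch_split3 (a q : ℂ) (n : ℕ) : qPoch a q (3 * n) =
    qPoch a (q ^ 3) n * qPoch (a * q) (q ^ 3) n * qPoch (a * q ^ 2) (q ^ 3) n := by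
  induction n with
  | zero => simp [qPoch]
  | succ n ih =>
    have : 3 * (n + 1) = 3 * n + 1 + 1 + 1 := by ring
    rw [this]
    unfold qPoch at *
    simp only [Finset.prod_range_succ]
    rw [ih]
    ring

lemma qPochInf_split3 (a q : ℂ) (h1 : ‖q‖ < 1) : qPochInf a q =
    qPochInf a (q ^ 3) * qPochInf (a * q) (q ^ 3) * qPochInf (a * q ^ 2) (q ^ 3) := by
  have h3 : ‖q ^ 3‖ < 1 := by
    rw [norm_pow]; exact pow_lt_one₀ (norm_nonneg _) h1 (by norm_num)
  have e : Tendsto (fun n : ℕ => 3 * n) atTop atTop :=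
    tendsto_id.const_mul_atTop' (by norm_num)
  have t1 := (aux_tendsto a h1).comp e
  have t2 := ((aux_tendsto a h3).mul (aux_tendsto (a * q) h3)).mul (aux_tendsto (a * q ^ 2) h3)
  refine tendsto_nhds_unique t1 (t2.congr fun n => ?_)
  simp [qPoch_split3]

lemma pow_ne_one' {q : ℂ} (h1 : ‖q‖ < 1) (n : ℕ) : 1 - q ^ (n + 1) ≠ 0 := by
  intro h
  have : ‖q ^ (n + 1)‖ < 1 := by
    rw [norm_pow]; exact pow_lt_one₀ (norm_nonneg _) h1 (by omega)
  rw [← sub_eq_zero.mp h] at this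
  simp at this

lemma P_succ (q : ℂ) (n : ℕ) : qPoch q q (n + 1) = qPoch q q n * (1 - q ^ (n + 1)) := by
  unfold qPoch
  rw [Finset.prod_range_succ]; ring

lemma P_ne {q : ℂ} (h1 : ‖q‖ < 1) (n : ℕ) : qPoch q q n ≠ 0 := by
  induction n with
  | zero => simp [qPoch]
  | succ n ih => rw [P_succ]; exact mul_ne_zero ih (pow_ne_one' h1 n)

lemma Pinf_ne {q : ℂ} (h1 : ‖q‖ < 1) : qPochInf q q ≠ 0 :=
  aux_ne h1 fun n => by
    have := pow_ne_one' h1 n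
    rwa [pow_succ'] at this

lemma P_inv_bound {q : ℂ} (h1 : ‖q‖ < 1) : ∃ C : ℝ, 0 < C ∧ ∀ n, ‖(qPoch q q n)⁻¹‖ ≤ C := by
  have t := (aux_tendsto q h1).inv₀ (Pinf_ne h1)
  obtain ⟨C, hC⟩ := (Metric.isBounded_range_of_tendsto _ t).exists_norm_le
  refine ⟨max C 1, by positivity, fun n => le_max_of_le_left (hC _ ⟨n, rfl⟩)⟩

/-- Durfee term -/
noncomputable def dT (q : ℂ) (n j : ℕ) : ℂ :=
  q ^ (j * (j + n)) * ((qPoch q q j)⁻¹ * (qPoch q q (j + n))⁻¹)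

lemma dT_bound {q : ℂ} (h1 : ‖q‖ < 1) {C : ℝ} (hC0 : 0 < C)
    (hC : ∀ n, ‖(qPoch q q n)⁻¹‖ ≤ C) (n j : ℕ) : ‖dT q n j‖ ≤ ‖q‖ ^ j * (C * C) := by
  unfold dT
  rw [norm_mul, norm_mul, norm_pow]
  have : ‖q‖ ^ (j * (j + n)) ≤ ‖q‖ ^ j := by
    apply pow_le_pow_of_le_one (norm_nonneg _) h1.le
    rcases j with _ | j
    · simp
    · nlinarith
  have := hC j
  have := hC (j + n)
  gcongr

lemma dT_summable {q : ℂ} (h1 : ‖q‖ < 1) (n : ℕ) : Summable (dT q n) := by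
  obtain ⟨C, hC0, hC⟩ := P_inv_bound h1
  exact Summable.of_norm_bounded
    ((summable_geometric_of_lt_one (norm_nonneg _) h1).mul_right (C * C)) (dT_bound h1 hC0 hC n)

lemma dT_rec {q : ℂ} (h1 : ‖q‖ < 1) (n : ℕ) :
    (∑' j, dT q n j) - ∑' j, dT q (n + 1) j
      = -q ^ (n + 1) * ((∑' j, dT q (n + 1) j) - ∑' j, dT q (n + 2) j) := by
  have s0 := dT_summable h1 n
  have s1 := dT_summable h1 (n + 1)
  have s2 := dT_summable h1 (n + 2)
  have key : ∀ j, dT q n j - dT q (n + 1) j + q ^ (n + 1) * dT q (n + 1) j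
      = q ^ (j * (j + n)) * (1 - q ^ j) * ((qPoch q q j)⁻¹ * (qPoch q q (j + n + 1))⁻¹) := by
    intro j
    have h2 := P_ne h1 (j + n)
    have h3 := P_ne h1 j
    have h4 := pow_ne_one' h1 (j + n)
    simp only [dT, ← add_assoc, P_succ]
    field_simp
    ring
  have sk := (s0.sub s1).add (s1.mul_left (q ^ (n + 1)))
  have e1 := sk.tsum_eq_zero_add
  have e2 : ∀ j, dT q n (j + 1) - dT q (n + 1) (j + 1) + q ^ (n + 1) * dT q (n + 1) (j + 1)
      = q ^ (n + 1) * dT q (n + 2) j := by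
    intro j
    rw [key, dT, P_succ q j]
    have h3 := P_ne h1 j
    have h4 := pow_ne_one' h1 j
    have h5 := P_ne h1 (j + 1 + n + 1)
    rw [show j + (n + 2) = j + 1 + n + 1 by ring]
    field_simp
    ring
  simp only [e2, key 0] at e1
  rw [Summable.tsum_add (s0.sub s1) (s1.mul_left _), s0.tsum_sub s1, tsum_mul_left, tsum_mul_left] at e1
  simp at e1
  linear_combination e1

lemma dT_tendsto {q : ℂ} (h1 : ‖q‖ < 1) :
    Tendsto (fun n => ∑' j, dT q n j) atTop (𝓝 (qPochInf q q)⁻¹) := by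
  obtain ⟨C, hC0, hC⟩ := P_inv_bound h1
  have : (qPochInf q q)⁻¹ = ∑' j : ℕ, if j = 0 then (qPochInf q q)⁻¹ else 0 := by
    rw [tsum_ite_eq]
  rw [this]
  refine tendsto_tsum_of_dominated_convergence
    ((summable_geometric_of_lt_one (norm_nonneg _) h1).mul_right (C * C)) ?_
    (Eventually.of_forall fun n j => dT_bound h1 hC0 hC n j)
  intro j
  have t := (aux_tendsto q h1).inv₀ (Pinf_ne h1)
  rcases j with _ | j
  · simp only [dT]
    simpa [qPoch] using t
  · simp only [dT, Nat.add_eq_zero_iff, one_ne_zero, and_false, if_false]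
    have t1 : Tendsto (fun n => (qPoch q q (j + 1 + n))⁻¹) atTop (𝓝 (qPochInf q q)⁻¹) := by
      refine t.comp (tendsto_atTop_mono (fun n => ?_) tendsto_id)
      simp
    have t2 : Tendsto (fun n => q ^ ((j + 1) * (j + 1 + n))) atTop (𝓝 0) := by
      refine (tendsto_pow_atTop_nhds_zero_of_norm_lt_one h1).comp
        (tendsto_atTop_mono (fun n => ?_) tendsto_id)
      simp only [id]; nlinarith
    simpa using t2.mul (t1.const_mul ((qPoch q q (j + 1))⁻¹))

lemma durfee {q : ℂ} (h1 : ‖q‖ < 1) (n : ℕ) : HasSum (dT q n) (qPochInf q q)⁻¹ := by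
  have hs := dT_summable h1
  set S : ℕ → ℂ := fun n => ∑' j, dT q n j with hS
  have hrec : ∀ n, S n - S (n + 1) = -q ^ (n + 1) * (S (n + 1) - S (n + 2)) := dT_rec h1
  have ht : Tendsto S atTop (𝓝 (qPochInf q q)⁻¹) := dT_tendsto h1
  have hD : ∀ n, S n - S (n + 1) = 0 := by
    intro n
    have tD : Tendsto (fun m => ‖S (n + m) - S (n + m + 1)‖) atTop (𝓝 0) := by
      have a := ht.comp (tendsto_atTop_mono (fun m => by simp) tendsto_id : Tendsto (fun m => n + m) atTop atTop)
      have b := ht.comp (tendsto_atTop_mono (fun m => by simp only [id]; omega) tendsto_id : Tendsto (fun m => n + m + 1) atTop atTop)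
      simpa using (a.sub b).norm
    have hle : ∀ m, ‖S n - S (n + 1)‖ ≤ ‖S (n + m) - S (n + m + 1)‖ := by
      intro m
      induction m with
      | zero => simp
      | succ m ih =>
        refine ih.trans ?_
        rw [hrec (n + m), norm_mul, norm_neg, norm_pow]
        exact mul_le_of_le_one_left (norm_nonneg _) (pow_le_one₀ (norm_nonneg _) h1.le)
    have := ge_of_tendsto' tD hle
    exact norm_le_zero_iff.mp this
  have hc : ∀ m, S (n + m) = S n := by
    intro m
    induction m with
    | zero => rfl
    | succ m ih => rw [← ih]; exact (sub_eq_zero.mp (hD (n + m))).symm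
  have : S n = (qPochInf q q)⁻¹ := by
    have a := ht.comp (tendsto_atTop_mono (fun m => by simp) tendsto_id : Tendsto (fun m => n + m) atTop atTop)
    refine tendsto_nhds_unique (tendsto_const_nhds.congr fun m => (hc m).symm) a
  rw [← this]
  exact (hs n).hasSum

/-- reindexing by the difference -/
def eZ : ℤ × ℕ ≃ ℕ × ℕ where
  toFun p := (p.2 + p.1.toNat, p.2 + (-p.1).toNat)
  invFun p := ((p.1 : ℤ) - p.2, min p.1 p.2)
  left_inv p := by
    rcases p with ⟨n, m⟩
    ext <;> simp <;> omega
  right_inv p := by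
    rcases p with ⟨n, m⟩
    ext <;> simp <;> omega

lemma eZ_diff (n : ℤ) (m : ℕ) : ((eZ (n, m)).1 : ℤ) - (eZ (n, m)).2 = n := by
  simp [eZ]

/-- symmetric Durfee term -/
noncomputable def aT (q : ℂ) (p : ℕ × ℕ) : ℂ :=
  q ^ (p.1 * p.2) * ((qPoch q q p.1)⁻¹ * (qPoch q q p.2)⁻¹)

lemma durfeeZ {q : ℂ} (h1 : ‖q‖ < 1) (n : ℤ) :
    HasSum (fun m : ℕ => aT q (eZ (n, m))) (qPochInf q q)⁻¹ := by
  rcases le_total 0 n with h | h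
  · convert durfee h1 n.toNat using 2 with m
    have : (-n).toNat = 0 := by omega
    simp only [aT, dT, eZ, Equiv.coe_fn_mk, this, add_zero]
    ring
  · convert durfee h1 (-n).toNat using 2 with m
    have : n.toNat = 0 := by omega
    simp only [aT, dT, eZ, Equiv.coe_fn_mk, this, add_zero]

lemma durfeeZ' {q : ℂ} (h0 : q ≠ 0) (h1 : ‖q‖ < 1) (n : ℤ) :
    HasSum (fun m : ℕ => aT q (eZ (n, m)) * q ^ (-((eZ (n, m)).2 : ℤ)))
      ((1 + q ^ n) * (qPochInf q q)⁻¹) := by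
  have hA := durfeeZ h1 n
  have hB := (durfeeZ h1 (n + 1)).mul_left (q ^ n)
  have key : ∀ k l : ℕ, aT q (k, l + 1) * q ^ (-((l + 1 : ℕ) : ℤ)) = aT q (k, l + 1)
      + q ^ ((k : ℤ) - (l + 1)) * aT q (k, l) := by
    intro k l
    have h2 := P_ne h1 k
    have h3 := P_ne h1 l
    have h4 := pow_ne_one' h1 l
    have e1 : q ^ (-((l + 1 : ℕ) : ℤ)) = (q ^ (l + 1))⁻¹ := by rw [zpow_neg, zpow_natCast]
    have e2 : q ^ ((k : ℤ) - (l + 1)) = q ^ k / q ^ (l + 1) := by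
      rw [zpow_sub₀ h0, zpow_natCast]; congr 1
    simp only [aT, P_succ, e1, e2]
    field_simp
    ring
  have hsum : HasSum (fun m : ℕ => aT q (eZ (n, m)) * q ^ (-((eZ (n, m)).2 : ℤ)) - aT q (eZ (n, m)))
      (q ^ n * (qPochInf q q)⁻¹) := by
    rcases le_or_gt 0 n with h | h
    · rw [← hasSum_nat_add_iff' 1]
      simp only [Finset.sum_range_one]
      have z : aT q (eZ (n, 0)) * q ^ (-((eZ (n, 0)).2 : ℤ)) - aT q (eZ (n, 0)) = 0 := by
        have : (eZ (n, 0)).2 = 0 := by simp [eZ]; omega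
        rw [this]; simp
      rw [z, sub_zero]
      refine (congrArg (fun f => HasSum f _) (funext fun m => ?_)).mpr hB
      have e : eZ (n, m + 1) = ((eZ (n + 1, m)).1, (eZ (n + 1, m)).2 + 1) := by
        ext <;> simp [eZ] <;> omega
      have d := eZ_diff (n + 1) m
      rw [e, key, add_sub_cancel_left]
      congr 2; omega
    · refine (congrArg (fun f => HasSum f _) (funext fun m => ?_)).mpr hB
      have e : eZ (n, m) = ((eZ (n + 1, m)).1, (eZ (n + 1, m)).2 + 1) := by
        ext <;> simp [eZ] <;> omega
      have d := eZ_diff (n + 1) m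
      rw [e, key, add_sub_cancel_left]
      congr 2; omega
  have := hsum.add hA
  simp only [sub_add_cancel] at this
  convert this using 1
  ring

/-- Euler coefficient -/
noncomputable def eT (q : ℂ) (i : ℕ) : ℂ := q ^ (i.choose 2) * (qPoch q q i)⁻¹

lemma eT_succ {q : ℂ} (h1 : ‖q‖ < 1) (i : ℕ) : eT q (i + 1) * (1 - q ^ (i + 1)) = eT q i * q ^ i := by
  have h2 := P_ne h1 i
  have h3 := pow_ne_one' h1 i
  have : (i + 1).choose 2 = i + i.choose 2 := by
    rw [Nat.choose_succ_succ' i 1, Nat.choose_one_right]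
  simp only [eT, P_succ, this]
  field_simp
  ring

lemma eT_summable {q : ℂ} (h0 : q ≠ 0) (h1 : ‖q‖ < 1) {z : ℂ} (hz : z ≠ 0) :
    Summable (fun i => ‖eT q i * z ^ i‖) := by
  have hne : ∀ i, eT q i ≠ 0 := fun i => mul_ne_zero (pow_ne_zero _ h0) (inv_ne_zero (P_ne h1 i))
  refine summable_of_ratio_test_tendsto_lt_one (l := 0) one_pos
    (Eventually.of_forall fun i => norm_ne_zero_iff.mpr (mul_ne_zero (hne i) (pow_ne_zero _ hz))) ?_
  have t1 : Tendsto (fun i => q ^ i * z / (1 - q ^ (i + 1))) atTop (𝓝 (0 * z / (1 - 0))) := by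
    have t := tendsto_pow_atTop_nhds_zero_of_norm_lt_one h1
    refine (t.mul_const z).div (tendsto_const_nhds.sub ((tendsto_add_atTop_iff_nat 1).mpr t)) (by simp)
  have t2 := t1.norm
  simp only [zero_mul, zero_div, norm_zero] at t2
  refine t2.congr fun i => ?_
  rw [norm_norm, norm_norm, ← norm_div]
  congr 1
  have := eT_succ h1 i
  have h3 := pow_ne_one' h1 i
  have h4 := hne i
  rw [eq_div_iff (mul_ne_zero h4 (pow_ne_zero _ hz))]
  field_simp
  linear_combination (-z ^ (i + 1)) * this

lemma euler {q : ℂ} (h0 : q ≠ 0) (h1 : ‖q‖ < 1) {z : ℂ} (hz : z ≠ 0) :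
    ∑' i, eT q i * z ^ i = qPochInf (-z) q := by
  set E : ℂ → ℂ := fun z => ∑' i, eT q i * z ^ i with hE
  have step : ∀ z ≠ 0, E z = (1 + z) * E (z * q) := by
    intro z hz
    have s1 := (eT_summable h0 h1 hz).of_norm
    have s2 := (eT_summable h0 h1 (mul_ne_zero hz h0)).of_norm
    have e := (s1.sub s2).tsum_eq_zero_add
    rw [s1.tsum_sub s2] at e
    have k : ∀ i, eT q (i + 1) * z ^ (i + 1) - eT q (i + 1) * (z * q) ^ (i + 1)
        = z * (eT q i * (z * q) ^ i) := by
      intro i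
      have := eT_succ h1 i
      rw [mul_pow, mul_pow]
      linear_combination z ^ (i + 1) * this
    simp only [k, tsum_mul_left, pow_zero, sub_self, zero_add] at e
    simp only [hE]
    linear_combination e
  have iter : ∀ n, E z = qPoch (-z) q n * E (z * q ^ n) := by
    intro n
    induction n with
    | zero => simp [qPoch]
    | succ n ih =>
      rw [ih, step _ (mul_ne_zero hz (pow_ne_zero _ h0))]
      unfold qPoch
      rw [Finset.prod_range_succ]
      ring_nf
  have lim : Tendsto (fun n : ℕ => E (z * q ^ n)) atTop (𝓝 1) := by
    have : (1 : ℂ) = ∑' j : ℕ, if j = 0 then 1 else 0 := by rw [tsum_ite_eq]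
    rw [this]
    refine tendsto_tsum_of_dominated_convergence (eT_summable h0 h1 hz) ?_ ?_
    · intro i
      rcases i with _ | i
      · simp [eT, qPoch]
      · simp only [Nat.add_eq_zero_iff, one_ne_zero, and_false, if_false]
        have t := tendsto_pow_atTop_nhds_zero_of_norm_lt_one h1
        have := ((t.const_mul z).pow (i + 1)).const_mul (eT q (i + 1))
        simpa using this
    · refine Eventually.of_forall fun n i => ?_
      rw [norm_mul, norm_mul, norm_pow, norm_pow, norm_mul, norm_pow]
      gcongr
      exact mul_le_of_le_one_right (norm_nonneg _) (pow_le_one₀ (norm_nonneg _) h1.le)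
  have t := (aux_tendsto (-z) h1).mul lim
  rw [mul_one] at t
  exact tendsto_nhds_unique (tendsto_const_nhds.congr iter) t

/-- triangular numbers on the integers -/
def tri (n : ℤ) : ℤ := n * (n - 1) / 2

lemma two_tri (n : ℤ) : 2 * tri n = n * (n - 1) := by
  unfold tri
  have : (2 : ℤ) ∣ n * (n - 1) := (Int.even_mul_pred_self n).two_dvd
  omega

lemma two_choose (i : ℕ) : 2 * ((i.choose 2 : ℕ) : ℤ) = i * (i - 1) := by
  induction i with
  | zero => simp
  | succ i ih =>
    rw [Nat.choose_succ_succ' i 1, Nat.choose_one_right]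
    push_cast
    linear_combination ih

lemma jtp {q : ℂ} (h0 : q ≠ 0) (h1 : ‖q‖ < 1) {w : ℂ} (hw : w ≠ 0) :
    Summable (fun n : ℤ => ‖q ^ tri n * w ^ n‖) ∧
    ∑' n : ℤ, q ^ tri n * w ^ n = qPochInf (-w) q * qPochInf (-(q / w)) q * qPochInf q q := by
  have hw' : q / w ≠ 0 := div_ne_zero h0 hw
  have s1 := eT_summable h0 h1 hw
  have s2 := eT_summable h0 h1 hw'
  have s3 := s1.mul_norm s2
  have e3 := tsum_mul_tsum_of_summable_norm s1 s2
  have term : ∀ p : ℤ × ℕ, (eT q (eZ p).1 * w ^ (eZ p).1) * (eT q (eZ p).2 * (q / w) ^ (eZ p).2)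
      = q ^ tri p.1 * w ^ p.1 * aT q (eZ p) := by
    rintro ⟨n, m⟩
    have d := eZ_diff n m
    set i := (eZ (n, m)).1
    set j := (eZ (n, m)).2
    have e : ((i.choose 2 : ℕ) : ℤ) + (j.choose 2 : ℕ) + j = tri n + i * j := by
      have a := two_choose i
      have b := two_choose j
      have c := two_tri n
      rw [← d] at c ⊢
      linarith
    have e' : q ^ (i.choose 2) * q ^ (j.choose 2) * q ^ j = q ^ tri n * q ^ (i * j) := by
      rw [← zpow_natCast q (i.choose 2), ← zpow_natCast q (j.choose 2), ← zpow_natCast q j,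
        ← zpow_natCast q (i * j), ← zpow_add₀ h0, ← zpow_add₀ h0, ← zpow_add₀ h0, e]
      push_cast; rfl
    have e2 : w ^ n = w ^ i / w ^ j := by
      rw [← d, zpow_sub₀ hw, zpow_natCast, zpow_natCast]
    simp only [eT, aT, e2, div_pow]
    field_simp
    linear_combination (qPoch q q i)⁻¹ * (qPoch q q j)⁻¹ * e'
  have s4 : Summable (fun p : ℤ × ℕ => ‖q ^ tri p.1 * w ^ p.1 * aT q (eZ p)‖) := by
    have := (eZ.summable_iff (f := fun x : ℕ × ℕ => ‖eT q x.1 * w ^ x.1 * (eT q x.2 * (q / w) ^ x.2)‖)).mpr s3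
    refine this.congr fun p => ?_
    simp only [Function.comp, term]
  have hJ := Pinf_ne h1
  have inner : ∀ n : ℤ, ∑' m : ℕ, q ^ tri n * w ^ n * aT q (eZ (n, m)) = q ^ tri n * w ^ n * (qPochInf q q)⁻¹ := by
    intro n
    rw [tsum_mul_left, (durfeeZ h1 n).tsum_eq]
  constructor
  · have s5 := s4.prod
    have s6 : Summable (fun n : ℤ => ‖q ^ tri n * w ^ n * (qPochInf q q)⁻¹‖) := by
      refine Summable.of_nonneg_of_le (fun _ => norm_nonneg _) (fun n => ?_) s5
      rw [← inner]
      exact norm_tsum_le_tsum_norm (s4.prod_factor n)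
    have := s6.mul_right ‖qPochInf q q‖
    refine this.congr fun n => ?_
    rw [norm_mul _ (qPochInf q q)⁻¹, mul_assoc, ← norm_mul _ (qPochInf q q), inv_mul_cancel₀ hJ]
    simp
  · rw [euler h0 h1 hw, euler h0 h1 hw', ← eZ.tsum_eq] at e3
    simp only [term] at e3
    rw [s4.of_norm.tsum_prod] at e3
    simp only [inner, tsum_mul_right] at e3
    rw [e3, inv_mul_cancel_right₀ hJ]

/-- shear -/
def eN : ℤ × (ℤ × ℤ) ≃ ℤ × (ℤ × ℤ) where
  toFun x := (x.1 - x.2.1 - x.2.2, x.2)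
  invFun x := (x.1 + x.2.1 + x.2.2, x.2)
  left_inv x := by ext <;> simp <;> ring
  right_inv x := by ext <;> simp <;> ring

/-- rotation -/
def eR (N : ℤ) : ℤ × ℤ ≃ ℤ × ℤ where
  toFun x := (N - x.1 - x.2, x.1)
  invFun x := (x.2, N - x.1 - x.2)
  left_inv x := by ext <;> simp <;> ring
  right_inv x := by ext <;> simp <;> ring

/-- exponent -/
def eX (x : ℤ × (ℤ × ℤ)) : ℤ := 3 * tri x.1 + (3 * tri x.2.1 + x.2.1) + (3 * tri x.2.2 + 2 * x.2.2)

lemma tri_succ (n : ℤ) : tri (n + 1) = tri n + n := by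
  have a := two_tri n
  have b := two_tri (n + 1)
  linarith

/-- exponent of the cubic theta function -/
def eC (x : ℤ × ℤ) : ℤ := 3 * (x.1 ^ 2 + x.1 * x.2 + x.2 ^ 2) + x.1 + 2 * x.2

set_option maxHeartbeats 1000000 in
lemma cubic {q : ℂ} (h0 : q ≠ 0) (h1 : ‖q‖ < 1) :
    Summable (fun x : ℤ × ℤ => ‖q ^ eC x‖) ∧
    (∑' x : ℤ × ℤ, q ^ eC x) * qPochInf q q = (qPochInf (q ^ 3) (q ^ 3)) ^ 3 := by
  have h3 : ‖q ^ 3‖ < 1 := by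
    rw [norm_pow]; exact pow_lt_one₀ (norm_nonneg _) h1 (by norm_num)
  have h30 : q ^ 3 ≠ 0 := pow_ne_zero _ h0
  obtain ⟨sa, ta⟩ := jtp h30 h3 one_ne_zero
  obtain ⟨sb, tb⟩ := jtp h30 h3 h0
  obtain ⟨sc, tc⟩ := jtp h30 h3 (pow_ne_zero 2 h0)
  obtain ⟨sd, td⟩ := jtp h0 h1 one_ne_zero
  have sbc := sb.mul_norm sc
  have tbc := tsum_mul_tsum_of_summable_norm sb sc
  have sabc := sa.mul_norm sbc
  have tabc := tsum_mul_tsum_of_summable_norm sa sbc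
  have term : ∀ x : ℤ × (ℤ × ℤ), ((q ^ 3) ^ tri x.1 * 1 ^ x.1) *
      (((q ^ 3) ^ tri x.2.1 * q ^ x.2.1) * ((q ^ 3) ^ tri x.2.2 * (q ^ 2) ^ x.2.2)) = q ^ eX x := by
    intro x
    have e3 : ∀ t : ℤ, (q ^ 3) ^ t = q ^ (3 * t) := fun t => by
      rw [zpow_mul]; norm_cast
    have e2 : ∀ t : ℤ, (q ^ 2) ^ t = q ^ (2 * t) := fun t => by
      rw [zpow_mul]; norm_cast
    rw [eX, zpow_add₀ h0, zpow_add₀ h0, zpow_add₀ h0, zpow_add₀ h0, e3, e3, e3, e2, one_zpow]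
    ring
  simp only [term] at sabc tabc
  have sN : Summable (fun x : ℤ × (ℤ × ℤ) => ‖q ^ eX (eN x)‖) := eN.summable_iff.mpr sabc
  rw [← tbc, ← eN.tsum_eq, sN.of_norm.tsum_prod] at tabc
  have rec1 : ∀ N, ∑' y, q ^ eX (eN (N + 1, y)) = q ^ N * ∑' y, q ^ eX (eN (N, y)) := by
    intro N
    rw [← (eR N).tsum_eq, ← tsum_mul_left]
    refine tsum_congr fun y => ?_
    rw [← zpow_add₀ h0]
    congr 1
    simp only [eX, eN, eR, Equiv.coe_fn_mk]
    rw [show N + 1 - (N - y.1 - y.2) - y.1 = y.2 + 1 by ring, tri_succ]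
    ring
  have z0 : ∀ y, eX (eN (0, y)) = eC y := by
    intro y
    simp only [eX, eN, eC, Equiv.coe_fn_mk]
    have a := two_tri (0 - y.1 - y.2)
    have b := two_tri y.1
    have c := two_tri y.2
    linarith
  have recN : ∀ N, ∑' y, q ^ eX (eN (N, y)) = q ^ tri N * ∑' y, q ^ eC y := by
    intro N
    induction N using Int.induction_on with
    | zero => simp [z0, tri]
    | succ i ih =>
      rw [rec1, ih, tri_succ, zpow_add₀ h0]; ring
    | pred i ih =>
      have a := rec1 (-(i : ℤ) - 1)
      have b := tri_succ (-(i : ℤ) - 1)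
      rw [sub_add_cancel] at a b
      rw [a, b, zpow_add₀ h0] at ih
      have : q ^ (-(i : ℤ) - 1) ≠ 0 := zpow_ne_zero _ h0
      apply mul_left_cancel₀ this
      rw [ih]; ring
  refine ⟨?_, ?_⟩
  · have := sN.prod_factor 0
    simpa only [z0] using this
  simp only [recN, tsum_mul_right] at tabc
  simp only [one_zpow, mul_one] at ta td tabc
  rw [ta, tb, tc, td] at tabc
  have p1 := qPochInf_split3 (-1) q h1
  have p2 := qPochInf_split3 (-q) q h1
  have d1 : q ^ 3 / q = q ^ 2 := by field_simp
  have d2 : q ^ 3 / q ^ 2 = q := by field_simp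
  rw [d1, d2, div_one, div_one] at tabc
  have n1 : ∀ n : ℕ, ‖q ^ n‖ ≤ 1 := fun n => by
    rw [norm_pow]; exact pow_le_one₀ (norm_nonneg _) h1.le
  have nz2 : qPochInf (-q) q ≠ 0 := aux_ne h1 fun n hn => by
    have : q ^ (n + 1) = -1 := by rw [pow_succ']; linear_combination hn
    have h : ‖q ^ (n + 1)‖ < 1 := by
      rw [norm_pow]; exact pow_lt_one₀ (norm_nonneg _) h1 (by omega)
    rw [this] at h
    simp at h
  have nz1 : qPochInf (-1) q ≠ 0 := aux_ne h1 fun n hn => by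
    rcases n with _ | n
    · norm_num at hn
    have : q ^ (n + 1) = -1 := by linear_combination hn
    have h : ‖q ^ (n + 1)‖ < 1 := by
      rw [norm_pow]; exact pow_lt_one₀ (norm_nonneg _) h1 (by omega)
    rw [this] at h
    simp at h
  apply mul_left_cancel₀ (mul_ne_zero nz1 nz2)
  have r1 : -1 * q = -q := by ring
  have r2 : -1 * q ^ 2 = -q ^ 2 := by ring
  have r3 : -q * q = -q ^ 2 := by ring
  have r4 : -q * q ^ 2 = -q ^ 3 := by ring
  rw [r1, r2] at p1
  rw [r3, r4] at p2
  calc _ = qPochInf (-1) q * qPochInf (-q) q * qPochInf q q * ∑' y, q ^ eC y := by ring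
    _ = _ := by
      rw [← tabc, p1, p2]; ring

/-- the A2 exponent -/
def eA (x : ℤ × ℤ) : ℤ := x.1 ^ 2 + x.1 * x.2 + x.2 ^ 2 + x.1

/-- the coset maps -/
def cosetMap (x : Fin 3 × (ℤ × ℤ)) : ℤ × ℤ :=
  match x with
  | (0, (n, p)) => (n + 2 * p, n - p)
  | (1, (n, p)) => (-1 + n - p, 1 + n + 2 * p)
  | (2, (n, p)) => (-1 + n - p, -2 * n - p)

lemma cosetMap_bij : Function.Bijective cosetMap := by
  constructor
  · rintro ⟨i, n, p⟩ ⟨j, n', p'⟩ h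
    fin_cases i <;> fin_cases j <;> simp [cosetMap] at h ⊢ <;> omega
  · rintro ⟨a, d⟩
    have : (a - d) % 3 = 0 ∨ (a - d) % 3 = 1 ∨ (a - d) % 3 = 2 := by omega
    rcases this with h | h | h
    · exact ⟨(0, (d + (a - d) / 3, (a - d) / 3)), by simp [cosetMap]; omega⟩
    · exact ⟨(1, (a + 1 - (a + 2 - d) / 3, -((a + 2 - d) / 3))),
        by simp [cosetMap]; omega⟩
    · exact ⟨(2, ((a + 1 - d) / 3, (a + 1 - d) / 3 - a - 1)), by simp [cosetMap]; omega⟩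

lemma a2theta {q : ℂ} (h0 : q ≠ 0) (h1 : ‖q‖ < 1) :
    Summable (fun x : ℤ × ℤ => q ^ eA x) ∧
    (∑' x : ℤ × ℤ, q ^ eA x) * qPochInf q q = 3 * (qPochInf (q ^ 3) (q ^ 3)) ^ 3 := by
  obtain ⟨s, t⟩ := cubic h0 h1
  let e := Equiv.ofBijective _ cosetMap_bij
  have key : ∀ i y, eA (e (i, y)) = eC y := by
    rintro i ⟨n, p⟩
    fin_cases i <;> simp [e, cosetMap, eA, eC] <;> ring
  have s1 : Summable (fun x : Fin 3 × (ℤ × ℤ) => ‖q ^ eA (e x)‖) := by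
    rw [summable_prod_of_nonneg (fun _ => norm_nonneg _)]
    refine ⟨fun i => ?_, (hasSum_fintype _).summable⟩
    simpa only [key] using s
  refine ⟨(e.summable_iff (f := fun x => q ^ eA x)).mp s1.of_norm, ?_⟩
  rw [← e.tsum_eq, s1.of_norm.tsum_prod]
  simp only [key, tsum_fintype, Finset.sum_const, Finset.card_univ, Fintype.card_fin]
  rw [← t]
  simp
  ring

/-- main reindexing -/
def eM : ((ℤ × ℤ) × ℕ) × ℕ ≃ ℕ × ℕ × ℕ × ℕ where
  toFun x := ((eZ (x.1.1.1 + ((eZ (x.1.1.2, x.1.2)).1 : ℤ), x.2)).1,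
    (eZ (x.1.1.1 + ((eZ (x.1.1.2, x.1.2)).1 : ℤ), x.2)).2, eZ (x.1.1.2, x.1.2))
  invFun p := ((((p.1 : ℤ) - p.2.1 - p.2.2.1, (p.2.2.1 : ℤ) - p.2.2.2), min p.2.2.1 p.2.2.2),
    min p.1 p.2.1)
  left_inv x := by
    rcases x with ⟨⟨⟨a, d⟩, m⟩, m'⟩
    simp only [eZ, Equiv.coe_fn_mk, Prod.mk.injEq]
    refine ⟨⟨⟨?_, ?_⟩, ?_⟩, ?_⟩ <;> push_cast <;> omega
  right_inv x := by
    rcases x with ⟨i, j, k, l⟩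
    simp only [eZ, Equiv.coe_fn_mk, Prod.mk.injEq]
    refine ⟨?_, ?_, ?_, ?_⟩ <;> push_cast <;> omega

/-- reflection -/
def eS : ℤ × ℤ ≃ ℤ × ℤ where
  toFun x := (x.1 + x.2, -x.2)
  invFun x := (x.1 + x.2, -x.2)
  left_inv x := by ext <;> simp
  right_inv x := by ext <;> simp

/-- main exponent -/
def eE (i j k l : ℤ) : ℤ := i^2 + j^2 + k^2 + l^2 - i*j - i*k - i*l + j*k + j*l + i - j - k - l

/-- main term -/
noncomputable def mT (q : ℂ) (p : ℕ × ℕ × ℕ × ℕ) : ℂ :=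
  q ^ eE p.1 p.2.1 p.2.2.1 p.2.2.2 *
    ((qPoch q q p.1)⁻¹ * (qPoch q q p.2.1)⁻¹ * (qPoch q q p.2.2.1)⁻¹ * (qPoch q q p.2.2.2)⁻¹)

lemma mT_summable {q : ℂ} (h0 : q ≠ 0) (h1 : ‖q‖ < 1) : Summable (mT q) := by
  obtain ⟨C, hC0, hC⟩ := P_inv_bound h1
  have g := summable_geometric_of_lt_one (norm_nonneg _) h1
  have gn : 0 ≤ fun n : ℕ => ‖q‖ ^ n := fun n => by positivity
  have g2 := g.mul_of_nonneg g gn gn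
  have g3 := g.mul_of_nonneg g2 gn (fun x => by dsimp; positivity)
  have g4 := g.mul_of_nonneg g3 gn (fun x => by dsimp; positivity)
  refine Summable.of_norm_bounded (g4.mul_right (‖q‖ ^ (-4 : ℤ) * (C * C * C * C))) ?_
  rintro ⟨i, j, k, l⟩
  simp only [mT]
  have hq : 0 < ‖q‖ := norm_pos_iff.mpr h0
  have hE : (i : ℤ) + j + k + l - 4 ≤ eE i j k l := by
    unfold eE
    nlinarith [sq_nonneg (2 * (j : ℤ) + k + l - i - 2), sq_nonneg ((i : ℤ) - k),
      sq_nonneg ((i : ℤ) - l), sq_nonneg ((k : ℤ) - l), sq_nonneg ((i : ℤ) - 2),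
      sq_nonneg ((k : ℤ) - 2), sq_nonneg ((l : ℤ) - 2)]
  have hb : ‖q‖ ^ eE i j k l ≤ ‖q‖ ^ ((i : ℤ) + j + k + l - 4) :=
    zpow_le_zpow_right_of_le_one₀ hq h1.le hE
  have he : ‖q‖ ^ ((i : ℤ) + j + k + l - 4) =
      ‖q‖ ^ i * (‖q‖ ^ j * (‖q‖ ^ k * ‖q‖ ^ l)) * ‖q‖ ^ (-4 : ℤ) := by
    rw [sub_eq_add_neg, zpow_add₀ hq.ne', zpow_add₀ hq.ne', zpow_add₀ hq.ne', zpow_add₀ hq.ne']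
    simp only [zpow_natCast]
    ring
  rw [he] at hb
  simp only [norm_mul, norm_zpow]
  have a := hC i
  have b := hC j
  have c := hC k
  have d := hC l
  have hc : ‖(qPoch q q i)⁻¹‖ * ‖(qPoch q q j)⁻¹‖ * ‖(qPoch q q k)⁻¹‖ * ‖(qPoch q q l)⁻¹‖
      ≤ C * C * C * C := by gcongr
  exact (mul_le_mul hb hc (by positivity) (by positivity)).trans_eq (by ring)

lemma mT_eM {q : ℂ} (h0 : q ≠ 0) (a d : ℤ) (m' m : ℕ) :
    mT q (eM (((a, d), m'), m)) = (q ^ eA (a, d) *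
      (aT q (eZ (d, m')) * q ^ (-((eZ (d, m')).2 : ℤ)))) *
      aT q (eZ (a + ((eZ (d, m')).1 : ℤ), m)) := by
  have h2 := eZ_diff d m'
  have h3 := eZ_diff (a + ((eZ (d, m')).1 : ℤ)) m
  simp only [mT, eM, Equiv.coe_fn_mk, aT]
  set k := (eZ (d, m')).1
  set l := (eZ (d, m')).2
  set i := (eZ (a + (k : ℤ), m)).1
  set j := (eZ (a + (k : ℤ), m)).2
  have e : eE i j k l = eA (a, d) + ((k * l : ℕ) : ℤ) + (-(l : ℤ)) + ((i * j : ℕ) : ℤ) := by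
    have ha : a = (i : ℤ) - j - k := by linarith
    rw [ha, ← h2]
    simp only [eE, eA]
    push_cast
    ring
  rw [e, zpow_add₀ h0, zpow_add₀ h0, zpow_add₀ h0, zpow_natCast, zpow_natCast]
  ring

set_option maxHeartbeats 1000000 in
lemma mT_tsum {q : ℂ} (h0 : q ≠ 0) (h1 : ‖q‖ < 1) :
    ∑' p, mT q p = 6 * (qPochInf (q ^ 3) (q ^ 3)) ^ 3 / (qPochInf q q) ^ 3 := by
  obtain ⟨sA, tA⟩ := a2theta h0 h1
  have hJ := Pinf_ne h1
  have s1 : Summable (fun x => mT q (eM x)) := eM.summable_iff.mpr (mT_summable h0 h1)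
  rw [← eM.tsum_eq, s1.tsum_prod]
  have s2 := s1.prod
  have i1 : ∀ x : (ℤ × ℤ) × ℕ, ∑' m, mT q (eM (x, m)) = (q ^ eA x.1 *
      (aT q (eZ (x.1.2, x.2)) * q ^ (-((eZ (x.1.2, x.2)).2 : ℤ)))) * (qPochInf q q)⁻¹ := by
    rintro ⟨⟨a, d⟩, m'⟩
    simp only [mT_eM h0]
    rw [tsum_mul_left, (durfeeZ h1 _).tsum_eq]
  simp only [i1] at s2 ⊢
  rw [s2.tsum_prod]
  have i2 : ∀ x : ℤ × ℤ, ∑' m, (q ^ eA x *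
      (aT q (eZ (x.2, m)) * q ^ (-((eZ (x.2, m)).2 : ℤ)))) * (qPochInf q q)⁻¹
      = (q ^ eA x + q ^ eA (eS x)) * ((qPochInf q q)⁻¹ * (qPochInf q q)⁻¹) := by
    intro x
    rw [tsum_mul_right, tsum_mul_left, (durfeeZ' h0 h1 _).tsum_eq]
    have : eA (eS x) = eA x + x.2 := by simp [eA, eS]; ring
    rw [this, zpow_add₀ h0]
    ring
  simp only [i2]
  have sS : Summable (fun x => q ^ eA (eS x)) := eS.summable_iff.mpr sA
  rw [tsum_mul_right, sA.tsum_add sS, eS.tsum_eq (fun x => q ^ eA x)]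
  field_simp
  linear_combination 2 * tA

theorem stmt_13 (q : ℂ) (h0 : 0 < ‖q‖) (h1 : ‖q‖ < 1) :
    (∑' p : ℕ × ℕ × ℕ × ℕ,
      (fun (i j k l : ℕ) =>
        q ^ (((i:ℤ)^2 + (j:ℤ)^2 + (k:ℤ)^2 + (l:ℤ)^2 - (i:ℤ)*(j:ℤ) - (i:ℤ)*(k:ℤ) - (i:ℤ)*(l:ℤ) + (j:ℤ)*(k:ℤ) + (j:ℤ)*(l:ℤ) + (i:ℤ) - (j:ℤ) - (k:ℤ) - (l:ℤ)) : ℤ) /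
          (qPoch (q ^ 1) (q ^ 1) i * qPoch (q ^ 1) (q ^ 1) j * qPoch (q ^ 1) (q ^ 1) k * qPoch (q ^ 1) (q ^ 1) l))
        p.1 p.2.1 p.2.2.1 p.2.2.2)
    = 6 * (J q 3)^3 / (J q 1)^3 := by
  have hq : q ≠ 0 := norm_pos_iff.mp h0
  have := mT_tsum hq h1
  simp only [J, pow_one]
  rw [← this]
  refine tsum_congr fun p => ?_
  simp only [mT, eE, div_eq_mul_inv, mul_inv]
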